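/- Let w be a finite word in the alphabet {X,A} and let n be the number of letters in w equal to X. Let p be an odd prime such that q = (p-1)/2 is relatively prime to n, and let G_p be the group of 2x2 matrices over Z/pZ of the form [[a, c],[0,1]] where a is a nonzero quadratic residue mod p and c is arbitrary. If the equation P_w(x^2, y^2) = 0 has a solution (x,y) with both coordinates nonzero elements of Z/pZ, then there exist A, B in G_p such that the word equation w(X,A) = B has no solution X in G_p. -/

import Mathlib

open MvPolynomial

/-- Evaluation of a word in the alphabet `{X, A}` (encoded as a `List Bool`,
with `true` standing for the letter `X` and `false` for the letter `A`)
at elements `x` (for `X`) and `a` (for `A`) of a monoid. -/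
def wordEval {M : Type*} [Monoid M] (w : List Bool) (x a : M) : M :=
  (w.map fun c => if c then x else a).prod

/-- The word polynomial `P_w ∈ ℤ[x,y]`: for
`w = A^{a_0} X A^{a_1} X ⋯ A^{a_{n-1}} X A^{a_n}` it is
`∑_{k=0}^{n-1} x^k y^{a_0 + ⋯ + a_k}`, where `x = X 0`, `y = X 1`. -/
noncomputable def wordPoly : List Bool → MvPolynomial (Fin 2) ℤ
  | [] => 0
  | true :: w => X 0 * wordPoly w + 1
  | false :: w => X 1 * wordPoly w

/-- Membership in the group `G_p` of `2 × 2` matrices `[[a, c], [0, 1]]` over `ℤ/pℤ`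
where `a` is a nonzero quadratic residue mod `p` and `c` is arbitrary. -/
def MemGp {p : ℕ} (M : Matrix (Fin 2) (Fin 2) (ZMod p)) : Prop :=
  (∃ s : ZMod p, s ≠ 0 ∧ M 0 0 = s ^ 2) ∧ M 1 0 = 0 ∧ M 1 1 = 1

/-!
Let `w` contain `n` letters `X` and `m` letters `A`. If `A = diag(v, 1)` and `X` has top row
`(s, c)`, then `w(X, A)` has top row `(s ^ n * v ^ m, c * P_w(s, v))`. Let `(u, v)` be a zero of
`P_w` and let `B` have top row `(u ^ n * v ^ m, 1)`. A solution `X` of `w(X, A) = B` satisfies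
`s ^ n = u ^ n`, hence `s = u` because taking `n`-th powers is injective on the admissible
diagonal entries; but then the off-diagonal entry of `w(X, A)` is `c * P_w(u, v) = 0 ≠ 1`.
-/

theorem pow_injOn_of_coprime (G : Type*) [Group G] {m n : ℕ} (hmn : m.Coprime n) :
    Set.InjOn (· ^ n) {g : G | g ^ m = 1} := by
  have eq_zpow {g : G} (hg : g ^ m = 1) : g = (g ^ n) ^ Nat.gcdB m n := by
    calc g = g ^ ((Nat.gcd m n : ℕ) : ℤ) := by simp [hmn.gcd_eq_one]
      _ = (g ^ m) ^ Nat.gcdA m n * (g ^ n) ^ Nat.gcdB m n := by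
        rw [Nat.gcd_eq_gcd_ab, zpow_add, zpow_mul, zpow_mul, zpow_natCast, zpow_natCast]
      _ = (g ^ n) ^ Nat.gcdB m n := by rw [hg, one_zpow, one_mul]
  intro g hg h hh (hgh : g ^ n = h ^ n)
  rw [eq_zpow hg, hgh, ← eq_zpow hh]

theorem pow_injOn_square_units (F : Type*) [CommGroupWithZero F] {n : ℕ} (hF : Odd (Nat.card F))
    (hn : ((Nat.card F - 1) / 2).Coprime n) :
    Set.InjOn (· ^ n) (Subgroup.square Fˣ : Set Fˣ) := by
  refine (pow_injOn_of_coprime Fˣ hn).mono ?_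
  rintro _ ⟨s, rfl⟩
  have hcard : 2 * ((Nat.card F - 1) / 2) = Nat.card Fˣ := by
    rw [Nat.two_mul_div_two_of_even (Nat.Odd.sub_odd hF odd_one), Nat.card_units]
  change (s * s) ^ ((Nat.card F - 1) / 2) = 1
  rw [← sq, ← pow_mul, hcard, pow_card_eq_one']

theorem exists_mem_square_units_eq_coe {F : Type*} [CommGroupWithZero F] {a : F} :
    (∃ u ∈ Subgroup.square Fˣ, a = u) ↔ ∃ s : F, s ≠ 0 ∧ a = s ^ 2 := by
  constructor
  · rintro ⟨_, ⟨s, rfl⟩, rfl⟩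
    exact ⟨s, s.ne_zero, by simp [sq]⟩
  · rintro ⟨s, hs, rfl⟩
    exact ⟨Units.mk0 s hs ^ 2, .sq _, by simp⟩

theorem wordEval_cons {M : Type*} [Monoid M] (b : Bool) (w : List Bool) (x a : M) :
    wordEval (b :: w) x a = (if b then x else a) * wordEval w x a := by
  simp [wordEval]

section AffineMatrix

variable {R : Type*} [Semiring R]

/-- The matrix `[[u, c], [0, 1]]` of the affine map `t ↦ u * t + c`. -/
def affineMatrix (u c : R) : Matrix (Fin 2) (Fin 2) R :=
  !![u, c; 0, 1]

/-- The group of affine matrices whose linear part lies in a group `H` of units, as a set of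
matrices. It generalizes `MemGp`, where `H` is the group of squares in `(ℤ/pℤ)ˣ`. -/
def affineMatrices (H : Subgroup Rˣ) : Set (Matrix (Fin 2) (Fin 2) R) :=
  {M | ∃ u ∈ H, ∃ c : R, affineMatrix (u : R) c = M}

theorem mem_affineMatrices {H : Subgroup Rˣ} {M : Matrix (Fin 2) (Fin 2) R} :
    M ∈ affineMatrices H ↔ (∃ u ∈ H, M 0 0 = u) ∧ M 1 0 = 0 ∧ M 1 1 = 1 := by
  constructor
  · rintro ⟨u, hu, c, rfl⟩
    exact ⟨⟨u, hu, rfl⟩, rfl, rfl⟩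
  · rintro ⟨⟨u, hu, h00⟩, h10, h11⟩
    exact ⟨u, hu, M 0 1, by rw [M.eta_fin_two, h00, h10, h11]; rfl⟩

theorem affineMatrix_mem_affineMatrices {H : Subgroup Rˣ} {u : Rˣ} (hu : u ∈ H) (c : R) :
    affineMatrix (u : R) c ∈ affineMatrices H :=
  ⟨u, hu, c, rfl⟩

theorem affineMatrix_inj {u u' c c' : R} :
    affineMatrix u c = affineMatrix u' c' ↔ u = u' ∧ c = c' := by
  simp [affineMatrix]

theorem affineMatrix_mul (u c u' c' : R) :
    affineMatrix u c * affineMatrix u' c' = affineMatrix (u * u') (u * c' + c) := by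
  simp [affineMatrix]

theorem affineMatrix_one_zero : affineMatrix (1 : R) 0 = 1 :=
  Matrix.one_fin_two.symm

end AffineMatrix

theorem memGp_iff_mem_affineMatrices {p : ℕ} [Fact p.Prime]
    {M : Matrix (Fin 2) (Fin 2) (ZMod p)} :
    MemGp M ↔ M ∈ affineMatrices (Subgroup.square (ZMod p)ˣ) := by
  rw [mem_affineMatrices, exists_mem_square_units_eq_coe, MemGp]

section WordEquation

variable {R : Type*} [CommRing R]

theorem wordEval_affineMatrix (w : List Bool) (u c v : R) :
    wordEval w (affineMatrix u c) (affineMatrix v 0) =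
      affineMatrix (u ^ w.count true * v ^ w.count false)
        (c * aeval ![u, v] (wordPoly w)) := by
  induction w with
  | nil => simp [wordEval, wordPoly, affineMatrix_one_zero]
  | cons b w ih =>
    rw [wordEval_cons, ih]
    cases b with
    | false =>
      simp only [Bool.false_eq_true, if_false, affineMatrix_mul, affineMatrix_inj]
      constructor
      · rw [List.count_cons_self, List.count_cons_of_ne Bool.false_ne_true, pow_succ]
        ring
      · simp only [wordPoly, map_mul, aeval_X, Matrix.cons_val_one, Matrix.cons_val_fin_one]
        ring
    | true =>
      simp only [if_true, affineMatrix_mul, affineMatrix_inj]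
      constructor
      · rw [List.count_cons_self, List.count_cons_of_ne Bool.false_ne_true.symm, pow_succ]
        ring
      · simp only [wordPoly, map_add, map_mul, map_one, aeval_X, Matrix.cons_val_zero]
        ring

theorem stmt16_general [Nontrivial R] (H : Subgroup Rˣ) (w : List Bool)
    (hinj : Set.InjOn (· ^ w.count true) (H : Set Rˣ))
    (hsol : ∃ u ∈ H, ∃ v ∈ H, aeval ![(u : R), (v : R)] (wordPoly w) = 0) :
    ∃ A ∈ affineMatrices H, ∃ B ∈ affineMatrices H,
      ¬ ∃ X ∈ affineMatrices H, wordEval w X A = B := by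
  obtain ⟨u, hu, v, hv, hroot⟩ := hsol
  have hdiag : u ^ w.count true * v ^ w.count false ∈ H :=
    mul_mem (pow_mem hu _) (pow_mem hv _)
  refine ⟨_, affineMatrix_mem_affineMatrices hv 0, _, affineMatrix_mem_affineMatrices hdiag 1, ?_⟩
  rintro ⟨_, ⟨s, hs, c, rfl⟩, hX⟩
  rw [wordEval_affineMatrix, affineMatrix_inj] at hX
  obtain ⟨hlin, htrans⟩ := hX
  have hpow : s ^ w.count true = u ^ w.count true :=
    mul_right_cancel (Units.ext (by exact_mod_cast hlin))
  have hsu : s = u := hinj hs hu hpow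
  rw [hsu, hroot, mul_zero] at htrans
  exact zero_ne_one htrans

end WordEquation

/-- Let `w` be a word with `n` letters equal to `X`, and let `p` be an odd prime with
`q = (p-1)/2` coprime to `n`.  If `P_w(x², y²) = 0` has a solution with both coordinates
nonzero mod `p`, then there are `A, B ∈ G_p` such that `w(X, A) = B` has no solution
`X ∈ G_p`. -/
theorem stmt16 (p : ℕ) (hp : p.Prime) (hodd : Odd p) (w : List Bool)
    (hcop : Nat.Coprime ((p - 1) / 2) (w.count true))
    (hsol : ∃ x y : ZMod p, x ≠ 0 ∧ y ≠ 0 ∧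
      aeval ![x ^ 2, y ^ 2] (wordPoly w) = 0) :
    ∃ A B : Matrix (Fin 2) (Fin 2) (ZMod p), MemGp A ∧ MemGp B ∧
      ¬ ∃ X : Matrix (Fin 2) (Fin 2) (ZMod p), MemGp X ∧ wordEval w X A = B := by
  have : Fact p.Prime := ⟨hp⟩
  obtain ⟨x, y, hx, hy, hroot⟩ := hsol
  simpa only [memGp_iff_mem_affineMatrices, exists_and_left] using
    stmt16_general (.square (ZMod p)ˣ) w (pow_injOn_square_units _ (by simpa) (by simpa))
      ⟨.mk0 x hx ^ 2, .sq _, .mk0 y hy ^ 2, .sq _, by simpa using hroot⟩
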